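/- arXiv:1503.05658 — 6 statements merged into one kernel-verified Lean document; each statement's English description precedes it below -/
import Mathlib

section
/- Let M be an m×d matrix with nonnegative integer entries, each column of M nonzero, and all row sums of M equal to some integer s ≥ 1, let P = {x ∈ R^d : x ≥ 0, Mx ≤ u} with u = (1,...,1)^t, let k = s + 1, and let Q = kP − u. Then P = Q ∩ R_{≥0}^d, where R_{≥0}^d is the nonnegative orthant. -/
/-!
Put `y = (s + 1) x - u`. Since every row of `M` sums to `s`, `M y = (s + 1) M x - s u`, so
`M y ≤ u` if and only if `M x ≤ u`. Moreover `y ≥ 0` forces `x = (y + u) / (s + 1) ≥ 0`. Hence for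
`y ≥ 0` the conditions `y ∈ P` and `x ∈ P` are equivalent.
-/

open Matrix Set Pointwise

/-- The set of integer lattice points in `ℝ^d`. -/
def latticePts (d : ℕ) : Set (Fin d → ℝ) := {x | ∀ i, ∃ z : ℤ, x i = (z : ℝ)}

/-- An integral (lattice) polytope: the convex hull of finitely many lattice points. -/
def IsIntegralPolytope {d : ℕ} (S : Set (Fin d → ℝ)) : Prop :=
  ∃ V : Finset (Fin d → ℝ), (↑V : Set (Fin d → ℝ)) ⊆ latticePts d ∧
    S = convexHull ℝ (↑V : Set (Fin d → ℝ))

/-- The dual polytope `S* = {x | x ⬝ y ≤ 1 for all y ∈ S}`. -/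
def dualPolytope {d : ℕ} (S : Set (Fin d → ℝ)) : Set (Fin d → ℝ) :=
  {x | ∀ y ∈ S, x ⬝ᵥ y ≤ 1}

/-- A polytope is reflexive if both it and its dual are integral polytopes. -/
def IsReflexive {d : ℕ} (S : Set (Fin d → ℝ)) : Prop :=
  IsIntegralPolytope S ∧ IsIntegralPolytope (dualPolytope S)

/-- The Ehrhart counting function `L_S(t) = #(tS ∩ ℤ^d)`. -/
noncomputable def latticeCount {d : ℕ} (S : Set (Fin d → ℝ)) (t : ℕ) : ℕ :=
  (((t : ℝ) • S) ∩ latticePts d).ncard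

/-- The Ehrhart series `Ehr_S(z) = 1 + ∑_{t ≥ 1} L_S(t) z^t`. -/
noncomputable def ehrhartSeries {d : ℕ} (S : Set (Fin d → ℝ)) : PowerSeries ℚ :=
  PowerSeries.mk fun t => if t = 0 then 1 else (latticeCount S t : ℚ)

/-- `P = Q ∩ ℝ_{≥0}^d` where `Q = (s+1)P - u`. -/
theorem positive_part_of_dilate (m d s : ℕ) (hs : 1 ≤ s)
    (M : Matrix (Fin m) (Fin d) ℕ)
    (hcol : ∀ j, ∃ i, M i j ≠ 0)
    (hrow : ∀ i, ∑ j, M i j = s)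
    (P : Set (Fin d → ℝ))
    (hP : P = {x : Fin d → ℝ | (∀ i, 0 ≤ x i) ∧ ∀ i, ∑ j, (M i j : ℝ) * x j ≤ 1})
    (Q : Set (Fin d → ℝ))
    (hQ : Q = (fun x : Fin d → ℝ => ((s : ℝ) + 1) • x - fun _ => (1 : ℝ)) '' P) :
    P = Q ∩ {x : Fin d → ℝ | ∀ i, 0 ≤ x i} := by
  subst hP hQ
  have hk : (0 : ℝ) < (s : ℝ) + 1 := by positivity
  have hrowR : ∀ i, ∑ j, (M i j : ℝ) = s := fun i => by exact_mod_cast hrow i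
  ext y
  simp only [mem_inter_iff, mem_image, mem_ofPred_eq]
  constructor
  · rintro ⟨hy0, hyM⟩
    refine ⟨⟨fun j => (y j + 1) / ((s : ℝ) + 1), ⟨fun j => ?_, fun i => ?_⟩, ?_⟩, hy0⟩
    · have := hy0 j
      positivity
    · have h : ∑ j, (M i j : ℝ) * ((y j + 1) / ((s : ℝ) + 1))
          = (∑ j, (M i j : ℝ) * y j + s) / ((s : ℝ) + 1) := by
        rw [← hrowR i, ← Finset.sum_add_distrib, Finset.sum_div]
        exact Finset.sum_congr rfl fun j _ => by ring
      rw [h, div_le_one hk]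
      linarith [hyM i]
    · ext j
      simp only [Pi.sub_apply, Pi.smul_apply, smul_eq_mul]
      field_simp
      ring
  · rintro ⟨⟨x, ⟨-, hxM⟩, rfl⟩, hy0⟩
    refine ⟨hy0, fun i => ?_⟩
    have h : ∑ j, (M i j : ℝ) * (((s : ℝ) + 1) * x j - 1)
        = ((s : ℝ) + 1) * ∑ j, (M i j : ℝ) * x j - s := by
      rw [Finset.mul_sum]
      conv_rhs => rw [← hrowR i, ← Finset.sum_sub_distrib]
      simp only [hrowR i]
      exact Finset.sum_congr rfl fun j _ => by ring
    simp only [Pi.sub_apply, Pi.smul_apply, smul_eq_mul]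
    rw [h]
    nlinarith [hxM i]
end

section
/- Let M be an m×d matrix with nonnegative integer entries, each column of M nonzero, all row sums of M equal to some integer s ≥ 1, let P = {x ∈ R^d : x ≥ 0, Mx ≤ u} with u = (1,...,1)^t, and let k = s + 1. Then for every integer t ≥ k, L_{P^o}(t) = L_P(t − k); that is, #(t·P^o ∩ Z^d) = #((t−k)·P ∩ Z^d). -/
/-!
The interior of `P` is cut out by the strict inequalities `x > 0`, `M x < 1`. A lattice point `y`
of `t • interior P` therefore satisfies `y ≥ 1` and, by integrality, `M y ≤ t - 1`. Since
every row of `M` sums to `s`, subtracting the all-ones vector turns these conditions into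
`y - 1 ≥ 0` and `M (y - 1) ≤ t - 1 - s`, which say that `y - 1` is a lattice point of
`(t - (s + 1)) • P`. Translation by the all-ones vector is thus a bijection between the two sets.
-/

open Matrix Set Pointwise

/-- The interior consists of the points satisfying all the inequalities strictly: moving an interior
point slightly along `±(1, …, 1)` changes each of them by a nonzero amount, because `s ≠ 0`. -/
lemma interior_eq_strict (m d s : ℕ) (hs : 1 ≤ s) (M : Matrix (Fin m) (Fin d) ℕ)
    (hrow : ∀ i, ∑ j, M i j = s) :
    interior {x : Fin d → ℝ | (∀ i, 0 ≤ x i) ∧ ∀ i, ∑ j, (M i j : ℝ) * x j ≤ 1} =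
      {x : Fin d → ℝ | (∀ i, 0 < x i) ∧ ∀ i, ∑ j, (M i j : ℝ) * x j < 1} := by
  have hrow' : ∀ i, ∑ j, (M i j : ℝ) = s := fun i => by exact_mod_cast hrow i
  have hs' : (0 : ℝ) < s := by exact_mod_cast hs
  apply Set.Subset.antisymm
  · intro x hx
    have hc : Continuous fun e : ℝ => (fun j => x j + e : Fin d → ℝ) := by fun_prop
    have hn : ∀ᶠ e : ℝ in nhds 0, (fun j => x j + e : Fin d → ℝ) ∈
        {x : Fin d → ℝ | (∀ i, 0 ≤ x i) ∧ ∀ i, ∑ j, (M i j : ℝ) * x j ≤ 1} := by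
      apply hc.continuousAt.eventually_mem
      simpa using mem_interior_iff_mem_nhds.1 hx
    obtain ⟨δ, hδ, h⟩ := Metric.eventually_nhds_iff.1 hn
    have h1 := @h (δ / 2) (by rw [Real.dist_eq, sub_zero, abs_of_pos] <;> linarith)
    have h2 := @h (-(δ / 2)) (by rw [Real.dist_eq, sub_zero, abs_neg, abs_of_pos] <;> linarith)
    refine ⟨fun i => ?_, fun i => ?_⟩
    · have := h2.1 i
      dsimp only at this
      linarith
    · have := h1.2 i
      simp only [mul_add, Finset.sum_add_distrib, ← Finset.sum_mul, hrow'] at this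
      have : 0 < (s : ℝ) * (δ / 2) := by positivity
      linarith
  · apply interior_maximal
    · exact fun x hx => ⟨fun i => (hx.1 i).le, fun i => (hx.2 i).le⟩
    · simp only [Set.ofPred_and, Set.ofPred_forall]
      exact (isOpen_iInter_of_finite fun i => isOpen_lt (by fun_prop) (by fun_prop)).inter
        (isOpen_iInter_of_finite fun i => isOpen_lt (by fun_prop) (by fun_prop))

/-- The inequalities defining the dilate `r • P`. For `r = 0` this says that `M x ≤ 0` and `x ≥ 0`
force `x = 0`, which holds because no column of `M` vanishes. -/
lemma mem_smul_iff (m d : ℕ) (M : Matrix (Fin m) (Fin d) ℕ) (hcol : ∀ j, ∃ i, M i j ≠ 0)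
    (r : ℕ) (y : Fin d → ℝ) :
    y ∈ (r : ℝ) • {x : Fin d → ℝ | (∀ i, 0 ≤ x i) ∧ ∀ i, ∑ j, (M i j : ℝ) * x j ≤ 1} ↔
      (∀ i, 0 ≤ y i) ∧ ∀ i, ∑ j, (M i j : ℝ) * y j ≤ r := by
  rcases Nat.eq_zero_or_pos r with rfl | hr
  · rw [Nat.cast_zero, Set.zero_smul_set ⟨0, by simp⟩, Set.mem_zero]
    constructor
    · rintro rfl
      simp
    · rintro ⟨h0, h1⟩
      funext j
      obtain ⟨i, hi⟩ := hcol j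
      have hnn : ∀ j ∈ Finset.univ, 0 ≤ (M i j : ℝ) * y j :=
        fun j _ => mul_nonneg (Nat.cast_nonneg _) (h0 j)
      have hz := (Finset.sum_eq_zero_iff_of_nonneg hnn).1
        (le_antisymm (h1 i) (Finset.sum_nonneg hnn)) j (Finset.mem_univ j)
      exact (mul_eq_zero.1 hz).resolve_left (by exact_mod_cast hi)
  · have hr' : (0 : ℝ) < r := by exact_mod_cast hr
    rw [Set.mem_smul_set_iff_inv_smul_mem₀ hr'.ne']
    simp only [Set.mem_ofPred_eq, Pi.smul_apply, smul_eq_mul, mul_left_comm _ (r : ℝ)⁻¹,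
      ← Finset.mul_sum, inv_mul_le_iff₀ hr', mul_one, inv_pos.2 hr', mul_nonneg_iff_of_pos_left]

lemma mem_smul_strict_iff (m d : ℕ) (M : Matrix (Fin m) (Fin d) ℕ)
    (r : ℕ) (hr : 0 < r) (y : Fin d → ℝ) :
    y ∈ (r : ℝ) • {x : Fin d → ℝ | (∀ i, 0 < x i) ∧ ∀ i, ∑ j, (M i j : ℝ) * x j < 1} ↔
      (∀ i, 0 < y i) ∧ ∀ i, ∑ j, (M i j : ℝ) * y j < r := by
  have hr' : (0 : ℝ) < r := by exact_mod_cast hr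
  rw [Set.mem_smul_set_iff_inv_smul_mem₀ hr'.ne']
  simp only [Set.mem_ofPred_eq, Pi.smul_apply, smul_eq_mul, mul_left_comm _ (r : ℝ)⁻¹,
    ← Finset.mul_sum, inv_mul_lt_iff₀ hr', mul_one, inv_pos.2 hr', mul_pos_iff_of_pos_left]

/-- For `t ≥ k = s + 1`, `L_{P°}(t) = L_P(t - k)` for a regular positive
reflexive polytope `P`. -/
theorem interior_count_eq_shifted_count (m d s : ℕ) (hs : 1 ≤ s)
    (M : Matrix (Fin m) (Fin d) ℕ)
    (hcol : ∀ j, ∃ i, M i j ≠ 0)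
    (hrow : ∀ i, ∑ j, M i j = s)
    (P : Set (Fin d → ℝ))
    (hP : P = {x : Fin d → ℝ | (∀ i, 0 ≤ x i) ∧ ∀ i, ∑ j, (M i j : ℝ) * x j ≤ 1}) :
    ∀ t : ℕ, s + 1 ≤ t → latticeCount (interior P) t = latticeCount P (t - (s + 1)) := by
  intro t ht
  have hrow' : ∀ i, ∑ j, (M i j : ℤ) = s := fun i => by exact_mod_cast hrow i
  subst hP
  unfold latticeCount
  rw [interior_eq_strict m d s hs M hrow,
    ← Set.ncard_image_of_injective
      ((((t - (s + 1) : ℕ) : ℝ) • {x : Fin d → ℝ | (∀ i, 0 ≤ x i) ∧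
        ∀ i, ∑ j, (M i j : ℝ) * x j ≤ 1}) ∩ latticePts d)
      (add_left_injective (1 : Fin d → ℝ))]
  congr 1
  ext y
  rw [Set.image_add_right, Set.mem_preimage, Set.mem_inter_iff, Set.mem_inter_iff,
    mem_smul_strict_iff m d M t (by omega), mem_smul_iff m d M hcol]
  have hlat : y + -1 ∈ latticePts d ↔ y ∈ latticePts d := by
    refine forall_congr' fun i => ⟨fun ⟨z, hz⟩ => ⟨z + 1, ?_⟩, fun ⟨z, hz⟩ => ⟨z - 1, ?_⟩⟩
    · simp only [Pi.add_apply, Pi.neg_apply, Pi.one_apply] at hz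
      push_cast
      linarith
    · simp only [Pi.add_apply, Pi.neg_apply, Pi.one_apply, hz]
      push_cast
      ring
  rw [hlat]
  refine and_congr_left fun hy => ?_
  choose z hz using hy
  obtain rfl : y = fun i => (z i : ℝ) := funext hz
  -- Over `ℤ`, a strict inequality `a < b` is the same as `a ≤ b - 1`.
  refine and_congr (forall_congr' fun i => ?_) (forall_congr' fun i => ?_)
  · have h : (0 : ℤ) < z i ↔ 0 ≤ z i + -1 := by omega
    simp only [Pi.add_apply, Pi.neg_apply, Pi.one_apply]
    exact_mod_cast h
  · have e : ∑ j, (M i j : ℤ) * (z j + -1) = ∑ j, (M i j : ℤ) * z j - s := by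
      simp only [mul_add, Finset.sum_add_distrib, ← Finset.sum_mul, hrow']
      ring
    have h : ∑ j, (M i j : ℤ) * z j < (t : ℤ) ↔
        ∑ j, (M i j : ℤ) * (z j + -1) ≤ ((t - (s + 1) : ℕ) : ℤ) := by
      rw [e]
      omega
    simp only [Pi.add_apply, Pi.neg_apply, Pi.one_apply]
    exact_mod_cast h
end

section
/- Let M be an m×d matrix with nonnegative integer entries, each column of M nonzero, all row sums of M equal to some integer s ≥ 1, let P = {x ∈ R^d : x ≥ 0, Mx ≤ u} with u = (1,...,1)^t, and let k = s + 1. Then the only integer lattice point in the interior of kP is u; that is, (k·P^o) ∩ Z^d = {u}. -/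
/-!
A point of `interior P` satisfies all defining inequalities strictly: it can be moved by a small
multiple of `u = (1,…,1)` in both directions without leaving `P`, and every row of `M` has
positive sum. So a lattice point `y` of `(s + 1) • interior P` has `y ≥ u` and `M y < s + 1`,
that is `M y ≤ s = M u` by integrality. Hence `M (y - u) ≤ 0` with `M` and `y - u` nonnegative, and
`y = u` because no column of `M` vanishes. Conversely `u / (s + 1)` satisfies all the inequalities
strictly, and the strict inequalities cut out an open subset of `P`.
-/

open Matrix Set Pointwise

/-- The interior of `{x ≥ 0, M x ≤ 1}` is given by the strict inequalities. -/
theorem interior_polytope {m d s : ℕ} (hs : 1 ≤ s) (M : Matrix (Fin m) (Fin d) ℕ)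
    (hrow : ∀ i, ∑ j, M i j = s) :
    interior {x : Fin d → ℝ | (∀ i, 0 ≤ x i) ∧ ∀ i, ∑ j, (M i j : ℝ) * x j ≤ 1} =
      {x | (∀ i, 0 < x i) ∧ ∀ i, ∑ j, (M i j : ℝ) * x j < 1} := by
  apply Subset.antisymm
  · intro x hx
    have hcont : Continuous fun t : ℝ => fun j => x j + t := by fun_prop
    have hnhds := hcont.continuousAt.preimage_mem_nhds (x := 0)
      (by simpa using mem_interior_iff_mem_nhds.mp hx)
    obtain ⟨ε, hε, hball⟩ := Metric.mem_nhds_iff.mp hnhds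
    have hpos := hball (show ε / 2 ∈ Metric.ball 0 ε
      by rw [Metric.mem_ball, Real.dist_eq, sub_zero, abs_of_pos] <;> linarith)
    have hneg := hball (show -(ε / 2) ∈ Metric.ball 0 ε
      by rw [Metric.mem_ball, Real.dist_eq, sub_zero, abs_neg, abs_of_pos] <;> linarith)
    refine ⟨fun j => ?_, fun i => ?_⟩
    · have := hneg.1 j
      linarith
    · have h := hpos.2 i
      have hsum : ∑ j, (M i j : ℝ) = s := by exact_mod_cast hrow i
      simp only [mul_add, Finset.sum_add_distrib, ← Finset.sum_mul, hsum] at h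
      have hs' : (0 : ℝ) < s := by exact_mod_cast hs
      have := mul_pos hs' (half_pos hε)
      linarith
  · refine interior_maximal (fun x hx => ⟨fun i => (hx.1 i).le, fun i => (hx.2 i).le⟩) ?_
    simp only [Set.ofPred_and, Set.ofPred_forall]
    refine (isOpen_iInter_of_finite fun i => ?_).inter (isOpen_iInter_of_finite fun i => ?_)
    · exact isOpen_lt (by fun_prop) (by fun_prop)
    · exact isOpen_lt (by fun_prop) (by fun_prop)

/-- The only lattice point in the interior of `kP` (with `k = s + 1`) is `u = (1,…,1)`. -/
theorem unique_interior_lattice_point (m d s : ℕ) (hs : 1 ≤ s)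
    (M : Matrix (Fin m) (Fin d) ℕ)
    (hcol : ∀ j, ∃ i, M i j ≠ 0)
    (hrow : ∀ i, ∑ j, M i j = s)
    (P : Set (Fin d → ℝ))
    (hP : P = {x : Fin d → ℝ | (∀ i, 0 ≤ x i) ∧ ∀ i, ∑ j, (M i j : ℝ) * x j ≤ 1}) :
    (((s : ℝ) + 1) • interior P) ∩ latticePts d = {fun _ => (1 : ℝ)} := by
  have hk : (0 : ℝ) < (s : ℝ) + 1 := by positivity
  have hsum : ∀ i, ∑ j, (M i j : ℝ) = s := fun i => by exact_mod_cast hrow i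
  rw [hP, interior_polytope hs M hrow]
  apply Subset.antisymm
  · rintro _ ⟨⟨x, ⟨hx0, hx1⟩, rfl⟩, hlat⟩
    choose z hz using hlat
    simp only [Pi.smul_apply, smul_eq_mul] at hz
    have hz1 : ∀ j, 1 ≤ z j := fun j => by
      have h : (0 : ℝ) < z j := hz j ▸ mul_pos hk (hx0 j)
      have : 0 < z j := by exact_mod_cast h
      omega
    have hMz : ∀ i, ∑ j, (M i j : ℤ) * z j ≤ s := fun i => by
      have h : ∑ j, (M i j : ℝ) * (z j : ℝ) < s + 1 := by
        have heq : ∑ j, (M i j : ℝ) * (z j : ℝ) = (s + 1) * ∑ j, (M i j : ℝ) * x j := by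
          rw [Finset.mul_sum]
          refine Finset.sum_congr rfl fun j _ => ?_
          rw [← hz j]
          ring
        rw [heq]
        exact mul_lt_of_lt_one_right hk (hx1 i)
      have h' : ∑ j, (M i j : ℤ) * z j < s + 1 := by exact_mod_cast h
      omega
    have hz_eq : ∀ j, z j = 1 := fun j => by
      obtain ⟨i, hi⟩ := hcol j
      have hnonneg : ∀ l ∈ Finset.univ, 0 ≤ (M i l : ℤ) * (z l - 1) := fun l _ =>
        mul_nonneg (by positivity) (by linarith [hz1 l])
      have hle : ∑ l, (M i l : ℤ) * (z l - 1) ≤ 0 := by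
        have : ∑ l, (M i l : ℤ) = s := by exact_mod_cast hrow i
        simp only [mul_sub, mul_one, Finset.sum_sub_distrib, this]
        linarith [hMz i]
      have h := (Finset.sum_eq_zero_iff_of_nonneg hnonneg).mp
        (le_antisymm hle (Finset.sum_nonneg hnonneg)) j (Finset.mem_univ j)
      rcases mul_eq_zero.mp h with h | h
      · exact absurd (by exact_mod_cast h) hi
      · linarith
    ext j
    simp [hz j, hz_eq j]
  · rintro _ rfl
    refine ⟨⟨fun _ => ((s : ℝ) + 1)⁻¹, ⟨fun _ => by positivity, fun i => ?_⟩, ?_⟩,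
      fun _ => ⟨1, by simp⟩⟩
    · rw [← Finset.sum_mul, hsum, ← div_eq_mul_inv, div_lt_one hk]
      linarith
    · ext j
      simp [hk.ne']
end

section
/- Let M be an m×d matrix with nonnegative integer entries, each column of M nonzero, all row sums of M equal to some integer s ≥ 1, let P = {x ∈ R^d : x ≥ 0, Mx ≤ u} with u = (1,...,1)^t, let k = s + 1, and let Q = kP − u. Then for every integer t ≥ k, one has the inclusion t·P ⊆ u + (t − k + 1)·Q. -/
/-!
Write `t = s + 1 + n` and let `x ∈ P`. Solving `t x = u + (n + 1) ((s + 1) y - u)` for `y` gives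
`y = (t x + n u) / ((n + 1) (s + 1))`. This `y` is nonnegative, and since `M u = s u` and
`M x ≤ u`, each entry of `M y` is at most `(t + n s) / ((n + 1) (s + 1)) = 1`; hence `y ∈ P`.
-/

open Matrix Set Pointwise

/-- For `t ≥ k = s + 1`, one has `t P ⊆ u + (t - k + 1) Q` where `Q = kP - u`. -/
theorem dilate_subset_translate (m d s : ℕ) (hs : 1 ≤ s)
    (M : Matrix (Fin m) (Fin d) ℕ)
    (hcol : ∀ j, ∃ i, M i j ≠ 0)
    (hrow : ∀ i, ∑ j, M i j = s)
    (P : Set (Fin d → ℝ))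
    (hP : P = {x : Fin d → ℝ | (∀ i, 0 ≤ x i) ∧ ∀ i, ∑ j, (M i j : ℝ) * x j ≤ 1})
    (Q : Set (Fin d → ℝ))
    (hQ : Q = (fun x : Fin d → ℝ => ((s : ℝ) + 1) • x - fun _ => (1 : ℝ)) '' P) :
    ∀ t : ℕ, s + 1 ≤ t →
      (t : ℝ) • P ⊆
        (fun x : Fin d → ℝ => (fun _ => (1 : ℝ)) + x) ''
          (((t - (s + 1) + 1 : ℕ) : ℝ) • Q) := by
  intro t ht
  obtain ⟨n, rfl⟩ := Nat.exists_eq_add_of_le ht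
  have hsub : s + 1 + n - (s + 1) + 1 = n + 1 := by omega
  rw [hsub]
  subst hP hQ
  rintro _ ⟨x, ⟨hx0, hx1⟩, rfl⟩
  have hn : (0 : ℝ) < (n : ℝ) + 1 := by positivity
  have hk : (0 : ℝ) < (s : ℝ) + 1 := by positivity
  set y : Fin d → ℝ := fun j => (((s : ℝ) + 1 + n) * x j + n) / ((n + 1) * (s + 1)) with hy
  refine ⟨_, ⟨_, ⟨y, ⟨fun j => ?_, fun i => ?_⟩, rfl⟩, rfl⟩, ?_⟩
  · have := hx0 j
    simp only [hy]
    positivity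
  · have hrow' : ∑ j, (M i j : ℝ) = s := by exact_mod_cast hrow i
    have hsum : ∑ j, (M i j : ℝ) * y j =
        (((s : ℝ) + 1 + n) * ∑ j, (M i j : ℝ) * x j + n * s) / ((n + 1) * (s + 1)) := by
      rw [← hrow', Finset.mul_sum, Finset.mul_sum, ← Finset.sum_add_distrib, Finset.sum_div,
        hrow']
      refine Finset.sum_congr rfl fun j _ => ?_
      simp only [hy]
      ring
    rw [hsum, div_le_one (by positivity)]
    have := mul_le_mul_of_nonneg_left (hx1 i) (by positivity : (0 : ℝ) ≤ (s : ℝ) + 1 + n)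
    linarith
  · funext j
    simp only [hy, Pi.add_apply, Pi.smul_apply, Pi.sub_apply, smul_eq_mul]
    push_cast
    field_simp
    ring
end

section
/- Let Q be a reflexive polytope in R^d. Then for every integer t ≥ 1, the integer lattice points of the interior of tQ are exactly the integer lattice points of (t−1)Q; that is, (t·Q^o) ∩ Z^d = ((t−1)·Q) ∩ Z^d. -/
/-!
Write `Q* = conv W` with `W` a finite set of lattice points. By Hahn–Banach (the bipolar theorem),
`Q = {x | w ⬝ x ≤ 1 for w ∈ W}`, so that `s Q = {x | w ⬝ x ≤ s for w ∈ W}` for all `s ≥ 0`, where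
the case `s = 0` uses the boundedness of `Q`. As `W` is finite, the interior of `Q` is given
by the strict inequalities `w ⬝ x < 1`, and that of `t Q` by `w ⬝ x < t`. At a lattice point
`x` every `w ⬝ x` is an integer, so `w ⬝ x < t` amounts to `w ⬝ x ≤ t - 1`.
-/

open Matrix Set Pointwise

/-- An inequality `w ⬝ x ≤ c` valid on `W` is valid on its convex hull. -/
lemma dotProduct_le_of_mem_convexHull {d : ℕ} {W : Set (Fin d → ℝ)} {x y : Fin d → ℝ} {c : ℝ}
    (h : ∀ w ∈ W, w ⬝ᵥ x ≤ c) (hy : y ∈ convexHull ℝ W) : y ⬝ᵥ x ≤ c := by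
  have hc : Convex ℝ {y : Fin d → ℝ | y ⬝ᵥ x ≤ c} :=
    convex_halfSpace_le ⟨fun a b => add_dotProduct a b x, fun r a => smul_dotProduct r a x⟩ c
  exact convexHull_min h hc hy

/-- Bipolar theorem: a closed convex set containing the origin is cut out by any set of points
whose convex hull is its dual. -/
lemma mem_iff_of_dual_eq_convexHull {d : ℕ} {Q W : Set (Fin d → ℝ)} (hconv : Convex ℝ Q)
    (hclosed : IsClosed Q) (h0 : (0 : Fin d → ℝ) ∈ Q) (hW : dualPolytope Q = convexHull ℝ W)
    (x : Fin d → ℝ) : x ∈ Q ↔ ∀ w ∈ W, w ⬝ᵥ x ≤ 1 := by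
  constructor
  · intro hx w hw
    have : w ∈ dualPolytope Q := hW ▸ subset_convexHull ℝ W hw
    exact this x hx
  · intro h
    by_contra hx
    obtain ⟨f, u, hfu, hux⟩ := geometric_hahn_banach_closed_point hconv hclosed hx
    have hu : 0 < u := by simpa using hfu 0 h0
    -- the separating functional, normalised to have value `1` on the hyperplane, lies in the dual
    let y : Fin d → ℝ := fun i => u⁻¹ * f (fun j => if i = j then 1 else 0)
    have hy : ∀ a, y ⬝ᵥ a = u⁻¹ * f a := by
      intro a
      have := LinearMap.pi_apply_eq_sum_univ (f : (Fin d → ℝ) →ₗ[ℝ] ℝ) a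
      simp only [ContinuousLinearMap.coe_coe, smul_eq_mul] at this
      rw [this, Finset.mul_sum]
      exact Finset.sum_congr rfl fun i _ => by simp only [y]; ring
    have hyd : y ∈ dualPolytope Q := by
      intro a ha
      rw [hy, inv_mul_le_iff₀ hu, mul_one]
      exact (hfu a ha).le
    have := dotProduct_le_of_mem_convexHull h (hW ▸ hyd)
    rw [hy, inv_mul_le_iff₀ hu, mul_one] at this
    linarith

/-- A bounded polyhedron `{x | w ⬝ x ≤ 1 for w ∈ W}` has recession cone zero. -/
lemma eq_zero_of_forall_dotProduct_nonpos {d : ℕ} {Q W : Set (Fin d → ℝ)}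
    (hb : Bornology.IsBounded Q) (hQ : ∀ x, x ∈ Q ↔ ∀ w ∈ W, w ⬝ᵥ x ≤ 1) {x : Fin d → ℝ}
    (hx : ∀ w ∈ W, w ⬝ᵥ x ≤ 0) : x = 0 := by
  obtain ⟨C, hC⟩ := hb.exists_norm_le
  by_contra hne
  have hpos : 0 < ‖x‖ := norm_pos_iff.mpr hne
  obtain ⟨n, hn⟩ := exists_nat_gt (C / ‖x‖)
  have hmem : (n : ℝ) • x ∈ Q := by
    rw [hQ]
    intro w hw
    rw [dotProduct_smul, smul_eq_mul]
    nlinarith [hx w hw, Nat.cast_nonneg (α := ℝ) n]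
  have := hC _ hmem
  rw [norm_smul, Real.norm_natCast] at this
  rw [div_lt_iff₀ hpos] at hn
  linarith

/-- If `W` is finite, the interior of the polyhedron `{x | w ⬝ x ≤ 1 for w ∈ W}` is given by the
strict inequalities. -/
lemma mem_interior_iff_forall_dotProduct_lt {d : ℕ} {Q W : Set (Fin d → ℝ)} (hfin : W.Finite)
    (hQ : ∀ x, x ∈ Q ↔ ∀ w ∈ W, w ⬝ᵥ x ≤ 1) (x : Fin d → ℝ) :
    x ∈ interior Q ↔ ∀ w ∈ W, w ⬝ᵥ x < 1 := by
  constructor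
  · intro hx w hw
    -- an interior point can be pushed slightly away from the origin within `Q`
    have hcont : Filter.Tendsto (fun r : ℝ => r • x) (nhdsWithin 1 (Ioi 1)) (nhds x) := by
      have : Continuous fun r : ℝ => r • x := by fun_prop
      simpa using (this.tendsto 1).mono_left nhdsWithin_le_nhds
    obtain ⟨r, hr, hr1⟩ := ((hcont.eventually (mem_interior_iff_mem_nhds.mp hx)).and
      self_mem_nhdsWithin).exists
    have h := (hQ _).mp hr w hw
    rw [dotProduct_smul, smul_eq_mul] at h
    have hr1' : 1 < r := hr1
    by_contra hcon
    nlinarith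
  · intro hx
    have hcont : ∀ w : Fin d → ℝ, Continuous fun x : Fin d → ℝ => w ⬝ᵥ x := fun w =>
      continuous_const.dotProduct continuous_id
    have hopen : IsOpen (⋂ w ∈ W, {x : Fin d → ℝ | w ⬝ᵥ x < 1}) :=
      hfin.isOpen_biInter fun w _ =>
        isOpen_lt (hcont w) continuous_const
    refine interior_maximal (fun z hz => ?_) hopen (by simpa using hx)
    rw [hQ]
    intro w hw
    exact (mem_iInter₂.mp hz w hw).le

/-- The dot product of two lattice points is an integer. -/
lemma exists_int_dotProduct {d : ℕ} {x y : Fin d → ℝ} (hx : x ∈ latticePts d)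
    (hy : y ∈ latticePts d) : ∃ z : ℤ, x ⬝ᵥ y = z := by
  choose a ha using hx
  choose b hb using hy
  exact ⟨∑ i, a i * b i, by simp [dotProduct, ha, hb]⟩

/-- For a reflexive polytope `Q` (containing the origin in its interior) and `t ≥ 1`,
the lattice points of `t Q°` are exactly those of `(t-1) Q`. -/
theorem reflexive_interior_lattice_points (d : ℕ) (Q : Set (Fin d → ℝ))
    (h0 : (0 : Fin d → ℝ) ∈ interior Q)
    (hQ : IsReflexive Q) :
    ∀ t : ℕ, 1 ≤ t →
      ((t : ℝ) • interior Q) ∩ latticePts d =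
      (((t - 1 : ℕ) : ℝ) • Q) ∩ latticePts d := by
  obtain ⟨⟨V, -, hV⟩, W, hWl, hW⟩ := hQ
  have hcomp : IsCompact Q := hV ▸ V.finite_toSet.isCompact_convexHull ℝ
  have hconv : Convex ℝ Q := hV ▸ convex_convexHull ℝ _
  have hmem := mem_iff_of_dual_eq_convexHull hconv hcomp.isClosed (interior_subset h0) hW
  have hint := mem_interior_iff_forall_dotProduct_lt W.finite_toSet hmem
  intro t ht
  obtain ⟨s, rfl⟩ : ∃ s, t = s + 1 := ⟨t - 1, by omega⟩
  rw [Nat.add_sub_cancel]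
  ext x
  refine and_congr_left fun hx => ?_
  have hleft : x ∈ ((s + 1 : ℕ) : ℝ) • interior Q ↔
      ∀ w ∈ (W : Set (Fin d → ℝ)), w ⬝ᵥ x < (s : ℝ) + 1 := by
    have hs : (0 : ℝ) < ((s + 1 : ℕ) : ℝ) := by positivity
    rw [mem_smul_set_iff_inv_smul_mem₀ hs.ne', hint]
    refine forall₂_congr fun w _ => ?_
    rw [dotProduct_smul, smul_eq_mul, inv_mul_lt_iff₀ hs, mul_one, Nat.cast_succ]
  have hright : x ∈ (s : ℝ) • Q ↔ ∀ w ∈ (W : Set (Fin d → ℝ)), w ⬝ᵥ x ≤ s := by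
    rcases Nat.eq_zero_or_pos s with rfl | hs
    · rw [Nat.cast_zero, zero_smul_set ⟨0, interior_subset h0⟩, Set.mem_zero]
      refine ⟨?_, eq_zero_of_forall_dotProduct_nonpos hcomp.isBounded hmem⟩
      rintro rfl w -
      simp
    · have hs : (0 : ℝ) < s := by exact_mod_cast hs
      rw [mem_smul_set_iff_inv_smul_mem₀ hs.ne', hmem]
      refine forall₂_congr fun w _ => ?_
      rw [dotProduct_smul, smul_eq_mul, inv_mul_le_iff₀ hs, mul_one]
  rw [hleft, hright]
  refine forall₂_congr fun w hw => ?_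
  obtain ⟨z, hz⟩ := exists_int_dotProduct (hWl hw) hx
  rw [hz]
  have h : z < (s : ℤ) + 1 ↔ z ≤ (s : ℤ) := Int.lt_add_one_iff
  exact_mod_cast h
end

section
/- Let G be a finite simple bipartite graph with vertex set [d] = {1,...,d} and at least one edge, such that every vertex of G is incident to at least one edge, and let P(G) = {x ∈ [0,1]^d : x_i + x_j ≤ 1 whenever ij is an edge of G} be its graph polytope. Then 3·P(G) − u is a reflexive polytope, where u = (1,...,1)^t. -/
/-!
Write `S = 3·P(G) - u`. As no vertex is isolated, the bounds `x i ≤ 1` are redundant and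
`S = {y | -1 ≤ y i for all i, y i + y j ≤ 1 for all edges ij}`.

`S` is integral by threshold rounding. Fix a 2-colouring and `y ∈ S`, with
`x i = (y i + 1) / 3 ∈ [0, 1]`. For `θ ∈ (0, 1]` round the coordinate `i` to `2` when `θ ≤ x i`
(first colour class) or `1 - x i < θ` (second colour class), and to `-1` otherwise. The rounded
point lies in `S`, since `θ ≤ x i` and `1 - x j < θ` would give `x i + x j > 1`. Its average over
`θ` is `y`, so `y` lies in the convex hull of the `{-1, 2}`-points of `S`.

The dual of `S` is the convex hull of the facet normals `-e_i` and `e_i + e_j` (`ij` an edge).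
This is polarity: a point `x` outside the hull is separated from it by a linear form, whose level
`u` is positive because `0` is the barycentre of `-e_i`, `-e_j`, `e_i + e_j`; the form divided by
`u` is a point of `S` whose pairing with `x` exceeds `1`.
-/

open Matrix Set Pointwise

open MeasureTheory

/-- The polytope `3·P(G) - u` by its inequalities, the redundant bounds `y i ≤ 2` omitted. -/
def facetPolytope {d : ℕ} (G : SimpleGraph (Fin d)) : Set (Fin d → ℝ) :=
  {y | (∀ i, -1 ≤ y i) ∧ ∀ i j, G.Adj i j → y i + y j ≤ 1}

/-- The outer normals of `facetPolytope G`, scaled so that each inequality reads `a ⬝ᵥ y ≤ 1`. -/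
def facetNormals {d : ℕ} (G : SimpleGraph (Fin d)) : Set (Fin d → ℝ) :=
  Set.range (fun i => -Pi.single i (1 : ℝ)) ∪
    (fun p : Fin d × Fin d => Pi.single p.1 (1 : ℝ) + Pi.single p.2 (1 : ℝ)) ''
      {p | G.Adj p.1 p.2}

lemma facetPolytope_le_two {d : ℕ} {G : SimpleGraph (Fin d)} (hiso : ∀ v, ∃ w, G.Adj v w)
    {y : Fin d → ℝ} (hy : y ∈ facetPolytope G) (i : Fin d) : y i ≤ 2 := by
  obtain ⟨w, hw⟩ := hiso i
  have h1 := hy.2 i w hw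
  have h2 := hy.1 w
  linarith

lemma image_eq_facetPolytope {d : ℕ} {G : SimpleGraph (Fin d)} (hiso : ∀ v, ∃ w, G.Adj v w) :
    (fun x : Fin d → ℝ => (3 : ℝ) • x - fun _ => (1 : ℝ)) ''
      {x : Fin d → ℝ | (∀ i, 0 ≤ x i ∧ x i ≤ 1) ∧
        ∀ i j : Fin d, G.Adj i j → x i + x j ≤ 1} = facetPolytope G := by
  ext y
  constructor
  · rintro ⟨x, ⟨h01, hadj⟩, rfl⟩
    refine ⟨fun i => ?_, fun i j hij => ?_⟩
    · have := (h01 i).1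
      simp only [Pi.sub_apply, Pi.smul_apply, smul_eq_mul]
      linarith
    · have := hadj i j hij
      simp only [Pi.sub_apply, Pi.smul_apply, smul_eq_mul]
      linarith
  · intro hy
    refine ⟨fun i => (y i + 1) / 3, ⟨fun i => ⟨?_, ?_⟩, fun i j hij => ?_⟩, ?_⟩
    · have := hy.1 i
      linarith
    · have := facetPolytope_le_two hiso hy i
      linarith
    · have := hy.2 i j hij
      linarith
    · ext i
      simp only [Pi.sub_apply, Pi.smul_apply, smul_eq_mul]
      ring

lemma convex_facetPolytope {d : ℕ} (G : SimpleGraph (Fin d)) : Convex ℝ (facetPolytope G) := by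
  rintro x ⟨hx1, hx2⟩ y ⟨hy1, hy2⟩ a b ha hb hab
  refine ⟨fun i => ?_, fun i j hij => ?_⟩
  · simp only [Pi.add_apply, Pi.smul_apply, smul_eq_mul]
    nlinarith [mul_le_mul_of_nonneg_left (hx1 i) ha, mul_le_mul_of_nonneg_left (hy1 i) hb]
  · simp only [Pi.add_apply, Pi.smul_apply, smul_eq_mul]
    nlinarith [mul_le_mul_of_nonneg_left (hx2 i j hij) ha,
      mul_le_mul_of_nonneg_left (hy2 i j hij) hb]

/-- The set of thresholds in `(0, 1]` at which the coordinate value `t` is rounded up, for a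
vertex of colour `c`; for `0 ≤ t ≤ 1` it is a subinterval of length `t`. -/
def roundUpSet (c : Fin 2) (t : ℝ) : Set ℝ := if c = 0 then Set.Ioc 0 t else Set.Ioc (1 - t) 1

lemma measurableSet_roundUpSet (c : Fin 2) (t : ℝ) : MeasurableSet (roundUpSet c t) := by
  unfold roundUpSet
  split_ifs <;> exact measurableSet_Ioc

lemma roundUpSet_subset (c : Fin 2) {t : ℝ} (h1 : t ≤ 1) :
    roundUpSet c t ⊆ Set.Ioc 0 1 := by
  unfold roundUpSet
  split_ifs
  · exact Set.Ioc_subset_Ioc le_rfl h1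
  · exact Set.Ioc_subset_Ioc (by linarith) le_rfl

lemma volume_real_roundUpSet (c : Fin 2) {t : ℝ} (h0 : 0 ≤ t) :
    volume.real (roundUpSet c t) = t := by
  unfold roundUpSet
  split_ifs
  · simp [Measure.real, h0]
  · simp [Measure.real, h0]

/-- No threshold rounds up two differently coloured vertices with values summing to at most `1`;
hence rounding preserves the edge inequalities. -/
lemma disjoint_roundUpSet {c c' : Fin 2} (hc : c ≠ c') {s t : ℝ} (hst : s + t ≤ 1) {θ : ℝ}
    (h : θ ∈ roundUpSet c s) (h' : θ ∈ roundUpSet c' t) : False := by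
  unfold roundUpSet at h h'
  split_ifs at h h' with h1 h2 h2
  · exact hc (h1.trans h2.symm)
  · linarith [h.2, h'.1]
  · linarith [h.1, h'.2]
  · omega

lemma isIntegralPolytope_facetPolytope {d : ℕ} {G : SimpleGraph (Fin d)}
    (hbip : G.Colorable 2) (hiso : ∀ v, ∃ w, G.Adj v w) :
    IsIntegralPolytope (facetPolytope G) := by
  classical
  obtain ⟨C⟩ := hbip
  have hfin : (Set.pi Set.univ (fun _ : Fin d => ({-1, 2} : Set ℝ)) ∩ facetPolytope G).Finite :=
    (Set.Finite.pi' (fun _ => Set.toFinite _)).subset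
      (fun x hx i => hx.1 i (Set.mem_univ i))
  refine ⟨hfin.toFinset, ?_, ?_⟩
  · intro x hx i
    rw [Set.Finite.coe_toFinset] at hx
    rcases hx.1 i (Set.mem_univ i) with h | h
    · exact ⟨-1, by simp [h]⟩
    · exact ⟨2, by rw [Set.mem_singleton_iff] at h; simp [h]⟩
  · rw [Set.Finite.coe_toFinset]
    refine Set.Subset.antisymm (fun y hy => ?_)
      (convexHull_min Set.inter_subset_right (convex_facetPolytope G))
    set R : Fin d → Set ℝ := fun i => roundUpSet (C i) ((y i + 1) / 3) with hR
    have hx0 : ∀ i, 0 ≤ (y i + 1) / 3 := fun i => by linarith [hy.1 i]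
    have hx1 : ∀ i, (y i + 1) / 3 ≤ 1 := fun i => by linarith [facetPolytope_le_two hiso hy i]
    set f : ℝ → Fin d → ℝ := fun θ i => (R i).indicator (fun _ => (3 : ℝ)) θ - 1 with hf
    set μ : Measure ℝ := volume.restrict (Set.Ioc 0 1) with hμ
    have : IsProbabilityMeasure μ := ⟨by simp [hμ]⟩
    have hRm : ∀ i, MeasurableSet (R i) := fun i => measurableSet_roundUpSet _ _
    have hint : ∀ i, Integrable (fun θ => f θ i) μ := fun i =>
      ((integrable_const (3 : ℝ)).indicator (hRm i)).sub (integrable_const 1)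
    have hmem : ∀ θ, f θ ∈
        convexHull ℝ (Set.pi Set.univ (fun _ : Fin d => ({-1, 2} : Set ℝ)) ∩ facetPolytope G) := by
      intro θ
      apply subset_convexHull
      refine ⟨fun i _ => ?_, fun i => ?_, fun i j hij => ?_⟩
      · by_cases h : θ ∈ R i
        · right; simp [hf, h]; norm_num
        · left; simp [hf, h]
      · by_cases h : θ ∈ R i <;> simp [hf, h]
      · by_cases hi : θ ∈ R i
        · have hj : θ ∉ R j := fun hj =>
            disjoint_roundUpSet (C.valid hij) (by linarith [hy.2 i j hij]) hi hj
          simp [hf, hi, hj]; norm_num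
        · by_cases hj : θ ∈ R j <;> simp [hf, hi, hj] <;> norm_num
    -- The rounded points average to the given point, the Bochner integral being coordinatewise.
    have hav : ∫ θ, f θ ∂μ = y := by
      ext i
      rw [eval_integral hint]
      have hvol : μ.real (R i) = (y i + 1) / 3 := by
        rw [hμ, measureReal_restrict_apply (hRm i),
          Set.inter_eq_left.mpr (roundUpSet_subset _ (hx1 i))]
        exact volume_real_roundUpSet _ (hx0 i)
      simp only [hf]
      rw [integral_sub ((integrable_const (3 : ℝ)).indicator (hRm i)) (integrable_const 1),
        integral_indicator_const _ (hRm i), hvol]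
      simp
    rw [← hav]
    exact (convex_convexHull ℝ _).integral_mem (hfin.isClosed_convexHull ℝ)
      (Filter.Eventually.of_forall hmem) (Integrable.of_eval hint)

lemma finite_facetNormals {d : ℕ} (G : SimpleGraph (Fin d)) : (facetNormals G).Finite :=
  (Set.finite_range _).union ((Set.toFinite _).image _)

lemma facetNormals_subset_latticePts {d : ℕ} (G : SimpleGraph (Fin d)) :
    facetNormals G ⊆ latticePts d := by
  rintro _ (⟨i, rfl⟩ | ⟨p, -, rfl⟩) k
  · exact ⟨-(Pi.single i (1 : ℤ) : Fin d → ℤ) k, by simp [Pi.single_apply]⟩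
  · exact ⟨(Pi.single p.1 (1 : ℤ) + Pi.single p.2 (1 : ℤ) : Fin d → ℤ) k,
      by simp [Pi.single_apply]⟩

lemma mem_facetPolytope_iff {d : ℕ} {G : SimpleGraph (Fin d)} {y : Fin d → ℝ} :
    y ∈ facetPolytope G ↔ ∀ a ∈ facetNormals G, a ⬝ᵥ y ≤ 1 := by
  constructor
  · rintro ⟨h1, h2⟩ _ (⟨i, rfl⟩ | ⟨p, hp, rfl⟩)
    · simpa [neg_dotProduct] using neg_le.mp (h1 i)
    · simpa [add_dotProduct] using h2 _ _ hp
  · intro h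
    refine ⟨fun i => ?_, fun i j hij => ?_⟩
    · have := h _ (Or.inl ⟨i, rfl⟩)
      simp only [neg_dotProduct, single_dotProduct, one_mul] at this
      linarith
    · simpa [add_dotProduct] using h _ (Or.inr ⟨(i, j), hij, rfl⟩)

/-- The origin is the barycentre of `-e_a`, `-e_b` and `e_a + e_b` for any edge `ab`. -/
lemma zero_mem_convexHull_facetNormals {d : ℕ} {G : SimpleGraph (Fin d)} {a b : Fin d}
    (hab : G.Adj a b) : (0 : Fin d → ℝ) ∈ convexHull ℝ (facetNormals G) := by
  have hc := convex_convexHull ℝ (facetNormals G)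
  have h1 := subset_convexHull ℝ (facetNormals G) (Or.inl ⟨a, rfl⟩)
  have h2 := subset_convexHull ℝ (facetNormals G) (Or.inl ⟨b, rfl⟩)
  have h3 := subset_convexHull ℝ (facetNormals G) (Or.inr ⟨(a, b), hab, rfl⟩)
  have h12 := hc h1 h2 (a := 1 / 2) (b := 1 / 2) (by norm_num) (by norm_num) (by norm_num)
  have h := hc h12 h3 (a := 2 / 3) (b := 1 / 3) (by norm_num) (by norm_num) (by norm_num)
  convert h using 1
  ext k
  simp only [Pi.zero_apply, Pi.add_apply, Pi.smul_apply, Pi.neg_apply, smul_eq_mul]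
  ring

lemma dualPolytope_facetPolytope {d : ℕ} {G : SimpleGraph (Fin d)} {a b : Fin d}
    (hab : G.Adj a b) :
    dualPolytope (facetPolytope G) = convexHull ℝ (facetNormals G) := by
  classical
  apply Set.Subset.antisymm
  · intro x hx
    by_contra hxA
    obtain ⟨l, u, hl, hu⟩ := geometric_hahn_banach_closed_point (convex_convexHull ℝ _)
      ((finite_facetNormals G).isClosed_convexHull ℝ) hxA
    have hu0 : 0 < u := by simpa using hl 0 (zero_mem_convexHull_facetNormals hab)
    -- The vector that represents the linear form `l / u` through the dot product.
    set y : Fin d → ℝ := fun i => l (Pi.single i 1) / u with hy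
    have hdot : ∀ z : Fin d → ℝ, z ⬝ᵥ y = l z / u := by
      intro z
      conv_rhs => rw [pi_eq_sum_univ' z]
      simp only [dotProduct, hy, map_sum, map_smul, smul_eq_mul, Finset.sum_div, mul_div_assoc]
    have hyS : y ∈ facetPolytope G := mem_facetPolytope_iff.mpr fun c hc => by
      rw [hdot, div_le_one hu0]
      exact (hl c (subset_convexHull ℝ _ hc)).le
    have h := hx y hyS
    rw [hdot, div_le_one hu0] at h
    linarith
  · refine convexHull_min (fun c hc y hy => mem_facetPolytope_iff.mp hy c hc) ?_
    intro x hx y hy s t hs ht hst z hz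
    have h1 := mul_le_mul_of_nonneg_left (hx z hz) hs
    have h2 := mul_le_mul_of_nonneg_left (hy z hz) ht
    simp only [add_dotProduct, smul_dotProduct, smul_eq_mul]
    linarith

/-- For a bipartite graph `G` on `[d]` with no isolated vertex and at least one edge,
`3·P(G) - u` is a reflexive polytope, where `P(G)` is the graph polytope. -/
theorem graph_polytope_dilate_reflexive (d : ℕ) (G : SimpleGraph (Fin d))
    (hbip : G.Colorable 2)
    (hedge : ∃ a b : Fin d, G.Adj a b)
    (hiso : ∀ v : Fin d, ∃ w : Fin d, G.Adj v w) :
    IsReflexive ((fun x : Fin d → ℝ => (3 : ℝ) • x - fun _ => (1 : ℝ)) ''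
      {x : Fin d → ℝ | (∀ i, 0 ≤ x i ∧ x i ≤ 1) ∧
        ∀ i j : Fin d, G.Adj i j → x i + x j ≤ 1}) := by
  rw [image_eq_facetPolytope hiso]
  obtain ⟨a, b, hab⟩ := hedge
  refine ⟨isIntegralPolytope_facetPolytope hbip hiso, (finite_facetNormals G).toFinset, ?_, ?_⟩
  · rw [Set.Finite.coe_toFinset]
    exact facetNormals_subset_latticePts G
  · rw [Set.Finite.coe_toFinset]
    exact dualPolytope_facetPolytope hab
end
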